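/- Let n ≥ 2 be a natural number and let U ⊆ (ℝ/ℤ)^n be a 2-dimensional proper subtorus. Then there exist N ∈ ℤ_{≥0} and positive rational numbers α₁,…,α_N, β₁,…,β_N such that only finitely many 1-dimensional proper subtori T of (ℝ/ℤ)^n contained in U have D(T) lying outside the set {D(U)} ∪ ⋃_{i=1}^N { D(U) + 1/(αᵢ·s + βᵢ) : s ∈ ℤ, s ≥ 0 }. -/

import Mathlib

noncomputable section

abbrev Torus (n : ℕ) : Type := Fin n → AddCircle (1 : ℝ)

def torusProj {n : ℕ} (x : Fin n → ℝ) : Torus n := fun i => (x i : AddCircle (1 : ℝ))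

def spanTorus {n k : ℕ} (v : Fin k → Fin n → ℤ) : Set (Torus n) :=
  {p | ∃ t : Fin k → ℝ, p = torusProj fun i => ∑ j, t j * (v j i : ℝ)}

def IsSubtorus {n : ℕ} (k : ℕ) (S : Set (Torus n)) : Prop :=
  ∃ v : Fin k → Fin n → ℤ,
    LinearIndependent ℝ (fun j : Fin k => fun i : Fin n => (v j i : ℝ)) ∧ S = spanTorus v

def IsProperSub {n : ℕ} (S : Set (Torus n)) : Prop :=
  ¬ S ⊆ ⋃ i : Fin n, {x : Torus n | x i = 0}

def DVal {n : ℕ} (S : Set (Torus n)) : ℝ :=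
  sInf ((fun x : Torus n => ⨆ i, dist (x i) ((1 / 2 : ℝ) : AddCircle (1 : ℝ))) '' S)

def relSpec1 {n : ℕ} (U : Set (Torus n)) : Set ℝ :=
  {d | ∃ T : Set (Torus n), IsSubtorus 1 T ∧ IsProperSub T ∧ T ⊆ U ∧ d = DVal T}

def Spec (k n : ℕ) : Set ℝ :=
  {d | ∃ T : Set (Torus n), IsSubtorus k T ∧ IsProperSub T ∧ d = DVal T}

def progSet (d : ℝ) (α β : ℚ) : Set ℝ :=
  {x | ∃ s : ℕ, x = d + 1 / ((α : ℝ) * s + (β : ℝ))}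

/-!
Fix integer vectors `a`, `b` spanning `U`. A one-dimensional subtorus of `U` is the image of a line
in the plane through a primitive integer vector `(x, y)`, and it contains every `p₁ a + p₂ b` whose
height `x p₂ - y p₁` is an integer; for large `(x, y)` it therefore passes close to a point of `U`
nearest the centre. So for all but finitely many subtori `T`, no rational number of small
denominator lies in the half-open interval from `D(U)` to `D(T)`, where `D(U)` itself is excluded.

Around a minimizer on the line, the distance to the centre is the maximum of finitely many integral
affine forms, and two forms with opposite slopes along the line attain the maximum `D(T)`. They are
not parallel, as otherwise `D(T)` would be rational with small denominator. Hence for each level `r`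
they meet in one point, the vertex, which moves affinely with `r`. Another form can overtake the
level only at a rational of small denominator, so the vertex stays in the sublevel set of the
distance as `r` decreases from `D(T)` to `D(U)`. By minimality of `D(T)` its height, which is zero
at `r = D(T)`, is not an integer for smaller `r`. At `r = D(U)` it is thus a nonzero number of
absolute value below `1` in a lattice that depends only on `U`, and dividing by the integral speed
of the vertex shows that `1 / (D(T) - D(U))` is rational with bounded denominator.
-/

open scoped Topology

section SmallDenominators

/-- No rational number of denominator at most `K` lies in `S`. -/
def AvoidsDenLE (K : ℕ) (S : Set ℝ) : Prop :=
  ∀ q : ℚ, q.den ≤ K → (q : ℝ) ∉ S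

lemma AvoidsDenLE.mono {K : ℕ} {S T : Set ℝ} (hT : AvoidsDenLE K T) (hST : S ⊆ T) :
    AvoidsDenLE K S :=
  fun q hq hqS => hT q hq (hST hqS)

lemma exists_rat_den_le {K : ℕ} {U V : ℤ} {r : ℝ} (hU : U ≠ 0) (hUK : |U| ≤ K)
    (h : (U : ℝ) * r = V) : ∃ q : ℚ, q.den ≤ K ∧ (q : ℝ) = r := by
  refine ⟨Rat.divInt V U, ?_, ?_⟩
  · have hden : ((Rat.divInt V U).den : ℤ) ≤ |U| :=
      Int.le_of_dvd (abs_pos.2 hU) ((dvd_abs _ _).2 (Rat.den_dvd V U))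
    exact_mod_cast hden.trans hUK
  · rw [Rat.divInt_eq_div]
    push_cast
    rw [← h]
    exact mul_div_cancel_left₀ r (Int.cast_ne_zero.2 hU)

lemma exists_int_eq_factorial_mul {K : ℕ} {q : ℚ} (hq : q.den ≤ K) :
    ∃ z : ℤ, (K.factorial : ℝ) * q = z := by
  obtain ⟨c, hc⟩ := Nat.dvd_factorial q.pos hq
  refine ⟨c * q.num, ?_⟩
  have hnum : (q.den : ℚ) * q = q.num := Rat.den_mul_eq_num q
  have hcast : (K.factorial : ℚ) * q = c * q.num := by rw [hc, ← hnum]; push_cast; ring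
  exact_mod_cast congrArg (Rat.cast (K := ℝ)) hcast

lemma avoidsDenLE_Ioc_floor {K : ℕ} {d r : ℝ} (hr : K.factorial * r < ⌊K.factorial * d⌋ + 1) :
    AvoidsDenLE K (Set.Ioc (⌊K.factorial * d⌋ / K.factorial) r) := by
  rintro q hq ⟨hdq, hqr⟩
  obtain ⟨z, hz⟩ := exists_int_eq_factorial_mul hq
  have hK : (0 : ℝ) < K.factorial := mod_cast K.factorial_pos
  have hlow : ⌊K.factorial * d⌋ < z := by
    rw [div_lt_iff₀' hK, hz] at hdq
    exact_mod_cast hdq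
  have hupp : z < ⌊K.factorial * d⌋ + 1 := by
    have : (z : ℝ) < ⌊K.factorial * d⌋ + 1 := hz ▸ (by gcongr : _ ≤ K.factorial * r).trans_lt hr
    exact_mod_cast this
  omega

/-- An integral affine function cannot turn negative without passing a rational zero of small
denominator; the real factor `w` only records a sign. -/
lemma AvoidsDenLE.mul_nonneg {K : ℕ} {U V : ℤ} {w r r₀ : ℝ} (hgap : AvoidsDenLE K (Set.Ioc r r₀))
    (hU : |U| ≤ K) (hr : r ≤ r₀) (h₀ : 0 ≤ w * (U * r₀ - V)) : 0 ≤ w * (U * r - V) := by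
  by_contra! hneg
  have hwU : 0 < w * U := by
    by_contra! hle
    nlinarith
  have hU₀ : (U : ℝ) ≠ 0 := right_ne_zero_of_mul hwU.ne'
  have hw₀ : w ≠ 0 := left_ne_zero_of_mul hwU.ne'
  obtain ⟨q, hqK, hq⟩ :=
    exists_rat_den_le (r := (V : ℝ) / U) (by exact_mod_cast hU₀) hU (mul_div_cancel₀ _ hU₀)
  refine hgap q hqK ?_
  rw [hq, ← mul_div_mul_left _ _ hw₀]
  exact ⟨by rw [lt_div_iff₀ hwU]; linarith, by rw [div_le_iff₀ hwU]; linarith⟩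

lemma exists_rat_inv_sub_of_affine {K Q : ℕ} {S P f : ℤ} {d r₀ : ℝ} (hd : Q * d = f)
    (hr₀ : S * r₀ + P = 0) (hpos : S * d + P ≠ 0) (hQ : Q ≠ 0) (hK : |S * d + P| ≤ K) :
    ∃ q : ℚ, q.den ≤ K * Q ∧ (q : ℝ) = (r₀ - d)⁻¹ := by
  have hJ : ((S * f + P * Q : ℤ) : ℝ) = Q * (S * d + P) := by
    push_cast
    rw [← hd]
    ring
  have hsub : r₀ - d ≠ 0 := by
    intro h
    rw [← sub_eq_zero.1 h] at hpos
    exact hpos hr₀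
  refine exists_rat_den_le (U := S * f + P * Q) (V := -(Q * S)) ?_ ?_ ?_
  · have : ((S * f + P * Q : ℤ) : ℝ) ≠ 0 := hJ ▸ mul_ne_zero (mod_cast hQ) hpos
    exact_mod_cast this
  · have : |((S * f + P * Q : ℤ) : ℝ)| ≤ K * Q := by
      rw [hJ, abs_mul, Nat.abs_cast, mul_comm]
      gcongr
    exact_mod_cast this
  · rw [hJ, ← div_eq_mul_inv, div_eq_iff hsub]
    push_cast
    linear_combination (Q : ℝ) * hr₀

lemma mem_progSet_of_rat_inv_sub {K : ℕ} {d r : ℝ} {q : ℚ} (hdr : d < r) (hq : q.den ≤ K)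
    (h : (q : ℝ) = (r - d)⁻¹) : r ∈ progSet d (1 / K.factorial) (1 / K.factorial) := by
  obtain ⟨z, hz⟩ := exists_int_eq_factorial_mul hq
  have hK : (0 : ℝ) < K.factorial := mod_cast K.factorial_pos
  have hsub : 0 < r - d := sub_pos.2 hdr
  rw [h] at hz
  have hz_pos : 0 < z := by
    have : (0 : ℝ) < z := hz ▸ by positivity
    exact_mod_cast this
  obtain ⟨s, rfl⟩ : ∃ s : ℕ, z = s + 1 := ⟨(z - 1).toNat, by omega⟩
  refine ⟨s, ?_⟩
  push_cast at hz ⊢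
  have hinv : 1 / (K.factorial : ℝ) * s + 1 / K.factorial = (r - d)⁻¹ := by
    rw [← mul_right_inj' hK.ne', hz]
    field_simp
  rw [hinv, one_div, inv_inv]
  ring

end SmallDenominators

section RealLine

lemma exists_eq_slope_nonneg {κ : Type*} [Finite κ] {u g : κ → ℝ} {r₀ : ℝ}
    (hu : ∀ k, u k ≤ r₀) (hmin : ∀ ε > 0, ∃ k, r₀ ≤ u k + ε * g k) :
    ∃ k, u k = r₀ ∧ 0 ≤ g k := by
  by_contra! hneg
  have hlt (k : κ) : ∀ᶠ ε in 𝓝[>] (0 : ℝ), u k + ε * g k < r₀ := by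
    rcases (hu k).lt_or_eq with h | h
    · have hc : ContinuousAt (fun ε : ℝ => u k + ε * g k) 0 := by fun_prop
      exact (hc.eventually_lt continuousAt_const (by simpa using h)).filter_mono
        nhdsWithin_le_nhds
    · filter_upwards [self_mem_nhdsWithin] with ε hε
      linarith [mul_neg_of_pos_of_neg hε (hneg k h)]
  obtain ⟨ε, hε, hε₀⟩ := ((Filter.eventually_all.2 hlt).and self_mem_nhdsWithin).exists
  obtain ⟨k, hk⟩ := hmin ε hε₀
  exact (hε k).not_ge hk

lemma abs_lt_one_of_forall_ne_intCast {φ : ℝ → ℝ} {d r₀ : ℝ} (hφ : ContinuousOn φ (Set.Icc d r₀))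
    (hdr : d ≤ r₀) (h₀ : φ r₀ = 0) (hne : ∀ r ∈ Set.Ico d r₀, ∀ z : ℤ, φ r ≠ z) :
    |φ d| < 1 := by
  by_contra! hge
  obtain ⟨r, hr, hφr⟩ : (1 : ℝ) ∈ (fun r => |φ r|) '' Set.Icc d r₀ :=
    intermediate_value_Icc' hdr hφ.abs ⟨by simp [h₀], hge⟩
  have hr_lt : r < r₀ := hr.2.lt_of_ne (by rintro rfl; simp [h₀] at hφr)
  rcases eq_or_eq_neg_of_abs_eq hφr with h | h
  · exact hne r ⟨hr.1, hr_lt⟩ 1 (by simpa using h)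
  · exact hne r ⟨hr.1, hr_lt⟩ (-1) (by simpa using h)

end RealLine

lemma abs_mul_sub_mul_le {a b c d A B : ℤ} (ha : |a| ≤ A) (hb : |b| ≤ B) (hc : |c| ≤ A)
    (hd : |d| ≤ B) : |a * b - c * d| ≤ 2 * (A * B) := by
  have hA : 0 ≤ A := (abs_nonneg a).trans ha
  calc |a * b - c * d| ≤ |a| * |b| + |c| * |d| := by
        simpa only [abs_mul] using abs_sub (a * b) (c * d)
    _ ≤ A * B + A * B := by gcongr
    _ = 2 * (A * B) := by ring

/-- The affine form `p ↦ a p₁ + b p₂ - c / 2` on the plane. The half-integral constant term is the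
one produced by distances to the centre `(1/2, …, 1/2)`. -/
structure HalfIntForm where
  a : ℤ
  b : ℤ
  c : ℤ

namespace HalfIntForm

/-- The value of the form at a point. -/
def eval (L : HalfIntForm) (p : ℝ × ℝ) : ℝ :=
  L.a * p.1 + L.b * p.2 - L.c / 2

/-- The coefficients of the linear part have absolute value at most `H`. -/
def BoundedBy (L : HalfIntForm) (H : ℕ) : Prop :=
  |L.a| ≤ H ∧ |L.b| ≤ H

/-- The determinant of the linear parts of two forms. -/
def det (L L' : HalfIntForm) : ℤ :=
  L.a * L'.b - L'.a * L.b

/-- The point where both `L` and `L'` take the value `r`, by Cramer's rule; it is meaningful only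
when `det L L' ≠ 0`. -/
def vertex (L L' : HalfIntForm) (r : ℝ) : ℝ × ℝ :=
  ((L.c * L'.b - L'.c * L.b + 2 * r * (L'.b - L.b)) / (2 * det L L'),
    (L.a * L'.c - L'.a * L.c + 2 * r * (L.a - L'.a)) / (2 * det L L'))

/-- The leading coefficient of the integral affine function `r ↦ 2 det(L, L') M(vertex L L' r)`. -/
def vertexSlope (L L' M : HalfIntForm) : ℤ :=
  2 * (M.a * (L'.b - L.b) - M.b * (L'.a - L.a))

/-- The constant term of the integral affine function `r ↦ 2 det(L, L') M(vertex L L' r)`. -/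
def vertexConst (L L' M : HalfIntForm) : ℤ :=
  M.a * (L.c * L'.b - L'.c * L.b) + M.b * (L.a * L'.c - L'.a * L.c) - M.c * det L L'

/-- The form `p ↦ x p₂ - y p₁`, vanishing exactly on the line through the origin in direction
`(x, y)` when `(x, y) ≠ 0`. -/
def height (x y : ℤ) : HalfIntForm :=
  ⟨-y, x, 0⟩

@[simp]
lemma eval_height (x y : ℤ) (p : ℝ × ℝ) : (height x y).eval p = x * p.2 - y * p.1 := by
  simp only [eval, height]
  push_cast
  ring

lemma eval_line (L : HalfIntForm) (x y : ℤ) (τ : ℝ) :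
    L.eval (τ * x, τ * y) = τ * (L.a * x + L.b * y : ℤ) - L.c / 2 := by
  simp only [eval]
  push_cast
  ring

@[fun_prop]
lemma continuous_eval (L : HalfIntForm) : Continuous L.eval := by
  unfold eval
  fun_prop

@[fun_prop]
lemma continuous_vertex (L L' : HalfIntForm) : Continuous (vertex L L') := by
  unfold vertex
  fun_prop

lemma two_mul_det_mul_eval_vertex {L L' : HalfIntForm} (hΔ : det L L' ≠ 0) (M : HalfIntForm)
    (r : ℝ) :
    2 * det L L' * M.eval (vertex L L' r) = vertexSlope L L' M * r + vertexConst L L' M := by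
  have hΔ' : (det L L' : ℝ) ≠ 0 := mod_cast hΔ
  simp only [eval, vertex, vertexSlope, vertexConst]
  field_simp
  push_cast
  ring

lemma eq_vertex {L L' : HalfIntForm} (hΔ : det L L' ≠ 0) {p : ℝ × ℝ} {r : ℝ}
    (h : L.eval p = r) (h' : L'.eval p = r) : p = vertex L L' r := by
  have hΔ' : (2 * det L L' : ℝ) ≠ 0 := mul_ne_zero two_ne_zero (mod_cast hΔ)
  simp only [eval] at h h'
  ext
  · rw [vertex, eq_div_iff hΔ']
    simp only [det]
    push_cast
    linear_combination (2 * L'.b : ℝ) * h - 2 * L.b * h'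
  · rw [vertex, eq_div_iff hΔ']
    simp only [det]
    push_cast
    linear_combination (2 * L.a : ℝ) * h' - 2 * L'.a * h

section Bounds

variable {L L' M : HalfIntForm} {H : ℕ}

lemma BoundedBy.abs_det_le (hL : L.BoundedBy H) (hL' : L'.BoundedBy H) :
    |det L L'| ≤ 2 * H ^ 2 := by
  simpa only [det, sq] using abs_mul_sub_mul_le hL.1 hL'.2 hL'.1 hL.2

lemma BoundedBy.abs_a_sub_le (hL : L.BoundedBy H) (hL' : L'.BoundedBy H) :
    |L.a - L'.a| ≤ 2 * H := by
  linarith [abs_sub L.a L'.a, hL.1, hL'.1]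

lemma BoundedBy.abs_b_sub_le (hL : L.BoundedBy H) (hL' : L'.BoundedBy H) :
    |L.b - L'.b| ≤ 2 * H := by
  linarith [abs_sub L.b L'.b, hL.2, hL'.2]

lemma BoundedBy.abs_vertexSlope_le (hL : L.BoundedBy H) (hL' : L'.BoundedBy H)
    (hM : M.BoundedBy H) : |vertexSlope L L' M| ≤ 8 * H ^ 2 := by
  have h := abs_mul_sub_mul_le hM.1 (hL'.abs_b_sub_le hL) hM.2 (hL'.abs_a_sub_le hL)
  rw [vertexSlope, abs_mul, abs_two]
  linarith

lemma exists_rat_of_det_eq_zero (hL : L.BoundedBy H) (hL' : L'.BoundedBy H) (hΔ : det L L' = 0)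
    {x y : ℤ} {τ r : ℝ} (h : L.eval (τ * x, τ * y) = r) (h' : L'.eval (τ * x, τ * y) = r)
    (hslope : 0 ≤ L.a * x + L.b * y) (hslope' : L'.a * x + L'.b * y ≤ 0) :
    ∃ q : ℚ, q.den ≤ max 2 (4 * H) ∧ (q : ℝ) = r := by
  have hΔ' : (L.a * L'.b - L'.a * L.b : ℝ) = 0 := by exact_mod_cast hΔ
  have hsmall {m : ℤ} (hm : |m| ≤ 2 * H) : |2 * m| ≤ (max 2 (4 * H) : ℕ) := by
    rw [abs_mul, abs_two]
    push_cast
    exact le_max_of_le_right (by linarith)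
  by_cases ha : L.a = L'.a
  · by_cases hb : L.b = L'.b
    · have hzero : L.a * x + L.b * y = 0 := by
        rw [← ha, ← hb] at hslope'
        exact le_antisymm hslope' hslope
      rw [eval_line, hzero] at h
      refine exists_rat_den_le (U := 2) (V := -L.c) two_ne_zero (by simp) ?_
      push_cast at h ⊢
      linear_combination -2 * h
    · refine exists_rat_den_le (V := L'.c * L.b - L.c * L'.b)
        (mul_ne_zero two_ne_zero (sub_ne_zero.2 (Ne.symm hb))) (hsmall (hL'.abs_b_sub_le hL)) ?_
      simp only [eval] at h h'
      push_cast
      linear_combination (2 * L.b : ℝ) * h' - 2 * L'.b * h + 2 * (τ * x) * hΔ'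
  · refine exists_rat_den_le (V := L'.a * L.c - L.a * L'.c)
      (mul_ne_zero two_ne_zero (sub_ne_zero.2 ha)) (hsmall (hL.abs_a_sub_le hL')) ?_
    simp only [eval] at h h'
    push_cast
    linear_combination (-2 * L.a : ℝ) * h' + 2 * L'.a * h + 2 * (τ * y) * hΔ'

lemma eval_vertex_le_of_avoidsDenLE (hL : L.BoundedBy H) (hL' : L'.BoundedBy H)
    (hM : M.BoundedBy H) (hΔ : det L L' ≠ 0) {r r₀ : ℝ}
    (hgap : AvoidsDenLE (12 * H ^ 2) (Set.Ioc r r₀)) (hr : r ≤ r₀)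
    (h₀ : M.eval (vertex L L' r₀) ≤ r₀) : M.eval (vertex L L' r) ≤ r := by
  have hΔ' : (0 : ℝ) < 2 * det L L' ^ 2 := by positivity
  have hslack (ρ : ℝ) : det L L' * ((2 * det L L' - vertexSlope L L' M : ℤ) * ρ
      - vertexConst L L' M) = 2 * det L L' ^ 2 * (ρ - M.eval (vertex L L' ρ)) := by
    push_cast
    linear_combination (det L L' : ℝ) * two_mul_det_mul_eval_vertex hΔ M ρ
  have hbound : |2 * det L L' - vertexSlope L L' M| ≤ (12 * H ^ 2 : ℕ) := by
    have h := abs_sub (2 * det L L') (vertexSlope L L' M)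
    rw [abs_mul, abs_two] at h
    push_cast
    linarith [hL.abs_det_le hL', hL.abs_vertexSlope_le hL' hM]
  have h := hgap.mul_nonneg hbound hr (w := det L L') (V := vertexConst L L' M)
    (hslack r₀ ▸ mul_nonneg hΔ'.le (sub_nonneg.2 h₀))
  rw [hslack] at h
  exact sub_nonneg.1 (nonneg_of_mul_nonneg_right h hΔ')

end Bounds

section MaxOfForms

variable {κ : Type*} {L : κ → HalfIntForm} {H : ℕ} {d r₀ τ : ℝ} {x y : ℤ}

lemma exists_opposite_tight [Finite κ] (h₀ : ∀ k, (L k).eval (τ * x, τ * y) ≤ r₀)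
    (hmin : ∀ τ' : ℝ, ∃ k, r₀ ≤ (L k).eval (τ' * x, τ' * y)) :
    ∃ k l, (L k).eval (τ * x, τ * y) = r₀ ∧ (L l).eval (τ * x, τ * y) = r₀ ∧
      0 ≤ (L k).a * x + (L k).b * y ∧ (L l).a * x + (L l).b * y ≤ 0 := by
  have hmove (k : κ) (ε : ℝ) : (L k).eval ((τ + ε) * x, (τ + ε) * y)
      = (L k).eval (τ * x, τ * y) + ε * ((L k).a * x + (L k).b * y : ℤ) := by
    rw [eval_line, eval_line]
    ring
  obtain ⟨k, hk, hk_slope⟩ := exists_eq_slope_nonneg h₀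
    (g := fun k => ((L k).a * x + (L k).b * y : ℤ)) fun ε _ => by
      obtain ⟨k, hk⟩ := hmin (τ + ε)
      exact ⟨k, hmove k ε ▸ hk⟩
  obtain ⟨l, hl, hl_slope⟩ := exists_eq_slope_nonneg h₀
    (g := fun k => -((L k).a * x + (L k).b * y : ℤ)) fun ε _ => by
      obtain ⟨k, hk⟩ := hmin (τ + -ε)
      rw [hmove] at hk
      exact ⟨k, by linarith⟩
  exact ⟨k, l, hk, hl, mod_cast hk_slope, by exact_mod_cast neg_nonneg.1 hl_slope⟩

lemma factorial_mul_eq_floor_of_vertex (hL : ∀ k, (L k).BoundedBy H)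
    (hd : ∀ p, ∃ k, d ≤ (L k).eval p) {k l : κ} (hΔ : det (L k) (L l) ≠ 0)
    (h₀ : ∀ j, (L j).eval (vertex (L k) (L l) r₀) ≤ r₀) (hdr : d ≤ r₀)
    (hr₀ : (12 * H ^ 2).factorial * r₀ < ⌊(12 * H ^ 2).factorial * d⌋ + 1) :
    (12 * H ^ 2).factorial * d = ⌊(12 * H ^ 2).factorial * d⌋ := by
  have hQ : (0 : ℝ) < (12 * H ^ 2).factorial := mod_cast Nat.factorial_pos _
  have hfloor : ⌊(12 * H ^ 2).factorial * d⌋ / (12 * H ^ 2).factorial ≤ d :=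
    (div_le_iff₀' hQ).2 (Int.floor_le _)
  obtain ⟨j, hj⟩ := hd (vertex (L k) (L l) (⌊(12 * H ^ 2).factorial * d⌋ / (12 * H ^ 2).factorial))
  have hle := hj.trans <| eval_vertex_le_of_avoidsDenLE (hL k) (hL l) (hL j) hΔ
    (avoidsDenLE_Ioc_floor hr₀) (hfloor.trans hdr) (h₀ j)
  exact le_antisymm ((le_div_iff₀' hQ).1 hle) (Int.floor_le _)

lemma eval_vertex_ne_intCast (hL : ∀ k, (L k).BoundedBy H) {k l : κ}
    (hΔ : det (L k) (L l) ≠ 0) (h₀ : ∀ j, (L j).eval (vertex (L k) (L l) r₀) ≤ r₀)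
    {N : HalfIntForm} (hmin : ∀ p (z : ℤ), N.eval p = z → ∃ j, r₀ ≤ (L j).eval p)
    (hgap : AvoidsDenLE (12 * H ^ 2) (Set.Ioc d r₀)) {r : ℝ} (hr : r ∈ Set.Ico d r₀) (z : ℤ) :
    N.eval (vertex (L k) (L l) r) ≠ z := by
  intro hz
  obtain ⟨j, hj⟩ := hmin _ z hz
  have hle := eval_vertex_le_of_avoidsDenLE (hL k) (hL l) (hL j) hΔ
    (hgap.mono (Set.Ioc_subset_Ioc_left hr.1)) hr.2.le (h₀ j)
  exact hr.2.not_ge (hj.trans hle)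

theorem exists_rat_inv_sub [Finite κ] (hH : 1 ≤ H) (hL : ∀ k, (L k).BoundedBy H)
    (hd : ∀ p, ∃ k, d ≤ (L k).eval p) (h₀ : ∀ k, (L k).eval (τ * x, τ * y) ≤ r₀)
    (hmin : ∀ p (z : ℤ), (height x y).eval p = z → ∃ k, r₀ ≤ (L k).eval p) (hdr : d < r₀)
    (hr₀ : (12 * H ^ 2).factorial * r₀ < ⌊(12 * H ^ 2).factorial * d⌋ + 1) :
    ∃ q : ℚ, q.den ≤ 4 * H ^ 2 * (12 * H ^ 2).factorial ∧ (q : ℝ) = (r₀ - d)⁻¹ := by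
  have hheight (τ' : ℝ) : (height x y).eval (τ' * x, τ' * y) = 0 := by
    rw [eval_height]
    ring
  obtain ⟨k, l, hk, hl, hk_slope, hl_slope⟩ :=
    exists_opposite_tight h₀ fun τ' => hmin _ 0 (by simpa using hheight τ')
  have hgap := avoidsDenLE_Ioc_floor hr₀
  have hfloor_le : ⌊(12 * H ^ 2).factorial * d⌋ / ((12 * H ^ 2).factorial : ℝ) ≤ d :=
    (div_le_iff₀' (mod_cast Nat.factorial_pos _)).2 (Int.floor_le _)
  have hΔ : det (L k) (L l) ≠ 0 := by
    intro hΔ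
    obtain ⟨q, hqden, hq⟩ := exists_rat_of_det_eq_zero (hL k) (hL l) hΔ hk hl hk_slope hl_slope
    refine hgap q (hqden.trans (max_le (by nlinarith) (by nlinarith))) ?_
    rw [hq]
    exact ⟨hfloor_le.trans_lt hdr, le_rfl⟩
  have hvertex := eq_vertex hΔ hk hl
  rw [hvertex] at h₀
  have hd_int := factorial_mul_eq_floor_of_vertex hL hd hΔ h₀ hdr.le hr₀
  have hne := fun r hr => eval_vertex_ne_intCast hL hΔ h₀ hmin
    (hgap.mono (Set.Ioc_subset_Ioc_left hfloor_le)) (r := r) hr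
  have hheight₀ : (height x y).eval (vertex (L k) (L l) r₀) = 0 := hvertex ▸ hheight τ
  have hlt := abs_lt_one_of_forall_ne_intCast (by fun_prop) hdr.le hheight₀ hne
  have haffine := two_mul_det_mul_eval_vertex hΔ (height x y)
  refine exists_rat_inv_sub_of_affine hd_int (by rw [← haffine, hheight₀, mul_zero]) ?_
    (Nat.factorial_ne_zero _) ?_
  · rw [← haffine]
    have hd₀ : (height x y).eval (vertex (L k) (L l) d) ≠ 0 := mod_cast hne d ⟨le_rfl, hdr⟩ 0
    exact mul_ne_zero (mul_ne_zero two_ne_zero (mod_cast hΔ)) hd₀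
  · have hdet : |(det (L k) (L l) : ℝ)| ≤ 2 * H ^ 2 := mod_cast (hL k).abs_det_le (hL l)
    rw [← haffine, abs_mul, abs_mul, abs_two]
    push_cast
    nlinarith [abs_nonneg (det (L k) (L l) : ℝ)]

end MaxOfForms

end HalfIntForm

section Distance

variable {n : ℕ} {a b : Fin n → ℤ}

/-- The centre `(1/2, …, 1/2)` of the torus. -/
def halfPt (n : ℕ) : Torus n := fun _ => ((1 / 2 : ℝ) : AddCircle (1 : ℝ))

/-- The point `p₁ a + p₂ b` of the torus: the parametrization of the plane spanned by the integer
vectors `a` and `b`. -/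
def planeMap (a b : Fin n → ℤ) (p : ℝ × ℝ) : Torus n :=
  torusProj fun i => p.1 * a i + p.2 * b i

/-- The image in the torus of the real line spanned by `x a + y b`. -/
def lineTorus (a b : Fin n → ℤ) (x y : ℤ) : Set (Torus n) :=
  Set.range fun τ : ℝ => planeMap a b (τ * x, τ * y)

/-- The forms `± (a i p₁ + b i p₂ - 1/2 - m i)`, whose maximum over all `i` and signs is the
sup-distance from `p₁ a + p₂ b` to the lift `(1/2, …, 1/2) + m` of the centre. -/
def liftForm (a b m : Fin n → ℤ) (k : Fin n × ℤˣ) : HalfIntForm :=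
  ⟨k.2 * a k.1, k.2 * b k.1, k.2 * (1 + 2 * m k.1)⟩

lemma eval_liftForm (a b m : Fin n → ℤ) (k : Fin n × ℤˣ) (p : ℝ × ℝ) :
    (liftForm a b m k).eval p
      = ((k.2 : ℤ) : ℝ) * (p.1 * a k.1 + p.2 * b k.1 - 1 / 2 - m k.1) := by
  simp only [HalfIntForm.eval, liftForm]
  push_cast
  ring

lemma boundedBy_liftForm {H : ℕ} (ha : ∀ i, |a i| ≤ H) (hb : ∀ i, |b i| ≤ H) (m : Fin n → ℤ)
    (k : Fin n × ℤˣ) : (liftForm a b m k).BoundedBy H := by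
  simp only [HalfIntForm.BoundedBy, liftForm, abs_mul, Int.isUnit_iff_abs_eq.1 k.2.isUnit, one_mul]
  exact ⟨ha k.1, hb k.1⟩

lemma DVal_eq_infDist (S : Set (Torus n)) : DVal S = Metric.infDist (halfPt n) S := by
  rw [DVal, Metric.infDist_eq_iInf, sInf_image']
  refine iInf_congr fun x => ?_
  rw [dist_comm]
  refine le_antisymm (Real.iSup_le (fun i => dist_le_pi_dist _ (halfPt n) i) dist_nonneg) ?_
  rw [dist_pi_le_iff (Real.iSup_nonneg fun i => dist_nonneg)]
  exact le_ciSup (f := fun i => dist (x.1 i) (halfPt n i)) (Set.finite_range _).bddAbove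

lemma dist_halfPt_apply (p : ℝ × ℝ) (i : Fin n) :
    dist (halfPt n i) (planeMap a b p i)
      = |p.1 * a i + p.2 * b i - 1 / 2 - round (p.1 * a i + p.2 * b i - 1 / 2)| := by
  rw [dist_comm, dist_eq_norm, halfPt, planeMap, torusProj, ← AddCircle.coe_sub]
  exact UnitAddCircle.norm_eq

lemma exists_forall_eval_liftForm_le (a b : Fin n → ℤ) (p : ℝ × ℝ) :
    ∃ m, ∀ k, (liftForm a b m k).eval p ≤ dist (halfPt n) (planeMap a b p) := by
  refine ⟨fun i => round (p.1 * a i + p.2 * b i - 1 / 2), fun k => ?_⟩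
  refine le_trans ?_ (dist_le_pi_dist _ _ k.1)
  rw [eval_liftForm, dist_halfPt_apply]
  refine (le_abs_self _).trans_eq ?_
  rw [abs_mul, ← Int.cast_abs, Int.isUnit_iff_abs_eq.1 k.2.isUnit, Int.cast_one, one_mul]

lemma exists_dist_le_eval_liftForm [Nonempty (Fin n)] (a b m : Fin n → ℤ) (p : ℝ × ℝ) :
    ∃ k, dist (halfPt n) (planeMap a b p) ≤ (liftForm a b m k).eval p := by
  obtain ⟨i, hi⟩ := Finite.exists_max fun i => dist (halfPt n i) (planeMap a b p i)
  have hdist : dist (halfPt n) (planeMap a b p) ≤ |p.1 * a i + p.2 * b i - 1 / 2 - m i| := by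
    refine ((dist_pi_le_iff dist_nonneg).2 hi).trans ?_
    rw [dist_halfPt_apply]
    exact round_le _ _
  rcases abs_choice (p.1 * a i + p.2 * b i - 1 / 2 - m i) with h | h
  · refine ⟨(i, 1), hdist.trans_eq ?_⟩
    rw [h, eval_liftForm]
    simp
  · refine ⟨(i, -1), hdist.trans_eq ?_⟩
    rw [h, eval_liftForm]
    simp

@[fun_prop]
lemma continuous_planeMap (a b : Fin n → ℤ) : Continuous (planeMap a b) :=
  continuous_pi fun i => (AddCircle.continuous_mk' 1).comp
    (by fun_prop : Continuous fun p : ℝ × ℝ => p.1 * (a i : ℝ) + p.2 * b i)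

lemma planeMap_add_intCast (a b : Fin n → ℤ) (s t : ℝ) (k l : ℤ) :
    planeMap a b (s + k, t + l) = planeMap a b (s, t) := by
  funext i
  have hsum : (s + k) * a i + (t + l) * b i = s * a i + t * b i + (k * a i + l * b i : ℤ) := by
    push_cast
    ring
  have hint : (((k * a i + l * b i : ℤ) : ℝ) : AddCircle (1 : ℝ)) = 0 :=
    (AddCircle.coe_eq_zero_iff 1).2 ⟨_, zsmul_one _⟩
  simp only [planeMap, torusProj]
  rw [hsum, AddCircle.coe_add, hint, add_zero]

lemma planeMap_mem_lineTorus {x y : ℤ} (hxy : IsCoprime x y) {p : ℝ × ℝ} {z : ℤ}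
    (hz : (HalfIntForm.height x y).eval p = z) : planeMap a b p ∈ lineTorus a b x y := by
  obtain ⟨u, v, huv⟩ := hxy
  have huv' : (u : ℝ) * x + v * y = 1 := mod_cast huv
  rw [HalfIntForm.eval_height] at hz
  refine ⟨u * p.1 + v * p.2, ?_⟩
  have hp : p = ((u * p.1 + v * p.2) * x + (-(z * v) : ℤ),
      (u * p.1 + v * p.2) * y + (z * u : ℤ)) := by
    ext
    · push_cast
      linear_combination (-p.1) * huv' - (v : ℝ) * hz
    · push_cast
      linear_combination (-p.2) * huv' + (u : ℝ) * hz
  rw [hp, planeMap_add_intCast, ← hp]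

lemma isCompact_lineTorus (a b : Fin n → ℤ) (x y : ℤ) : IsCompact (lineTorus a b x y) := by
  have hper : Function.Periodic (fun τ : ℝ => planeMap a b (τ * x, τ * y)) 1 := fun τ => by
    simp only [add_mul, one_mul, planeMap_add_intCast]
  exact hper.compact_of_continuous one_ne_zero (by fun_prop)

lemma exists_DVal_lineTorus_eq_dist (a b : Fin n → ℤ) (x y : ℤ) :
    ∃ τ : ℝ, DVal (lineTorus a b x y) = dist (halfPt n) (planeMap a b (τ * x, τ * y)) := by
  obtain ⟨_, ⟨τ, rfl⟩, hτ⟩ :=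
    (isCompact_lineTorus a b x y).exists_infDist_eq_dist (Set.range_nonempty _) (halfPt n)
  exact ⟨τ, (DVal_eq_infDist _).trans hτ⟩

lemma exists_dist_le_height_eq_intCast {q : ℤ × ℤ} (hq : q ≠ 0) (p : ℝ × ℝ) :
    ∃ (p' : ℝ × ℝ) (z : ℤ), (HalfIntForm.height q.1 q.2).eval p' = z ∧
      dist p' p ≤ 1 / 2 / ‖q‖ := by
  set h := (HalfIntForm.height q.1 q.2).eval p with h_def
  rw [HalfIntForm.eval_height] at h_def
  have hq' : 0 < ‖q‖ := norm_pos_iff.2 hq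
  have hsmall {x : ℤ} (hx : ‖q‖ = ‖x‖) : |(h - round h) / x| ≤ 1 / 2 / ‖q‖ := by
    rw [abs_div, hx, Int.norm_eq_abs]
    gcongr
    exact abs_sub_round h
  rcases max_choice ‖q.1‖ ‖q.2‖ with hmax | hmax
  · have hx : (q.1 : ℝ) ≠ 0 := by
      rw [Prod.norm_def, hmax] at hq'
      exact mod_cast norm_pos_iff.1 hq'
    refine ⟨(p.1, p.2 - (h - round h) / q.1), round h, ?_, ?_⟩
    · rw [HalfIntForm.eval_height]
      field_simp
      linarith
    · rw [Prod.dist_eq, dist_self, Real.dist_eq, sub_sub_cancel_left, abs_neg]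
      exact max_le (by positivity) (hsmall hmax)
  · have hy : (q.2 : ℝ) ≠ 0 := by
      rw [Prod.norm_def, hmax] at hq'
      exact mod_cast norm_pos_iff.1 hq'
    refine ⟨(p.1 + (h - round h) / q.2, p.2), round h, ?_, ?_⟩
    · rw [HalfIntForm.eval_height]
      field_simp
      linarith
    · rw [Prod.dist_eq, dist_self, Real.dist_eq, add_sub_cancel_left]
      exact max_le (hsmall hmax) (by positivity)

lemma finite_setOf_le_DVal_lineTorus {c : ℝ} (hc : DVal (Set.range (planeMap a b)) < c) :
    {q : ℤ × ℤ | IsCoprime q.1 q.2 ∧ c ≤ DVal (lineTorus a b q.1 q.2)}.Finite := by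
  rw [DVal_eq_infDist, Metric.infDist_lt_iff (Set.range_nonempty _)] at hc
  obtain ⟨_, ⟨p, rfl⟩, hp⟩ := hc
  have hnear : ∀ᶠ p' in 𝓝 p, dist (halfPt n) (planeMap a b p') < c :=
    ContinuousAt.eventually_lt (by fun_prop) continuousAt_const hp
  obtain ⟨ρ, hρ, hball⟩ := Metric.eventually_nhds_iff.1 hnear
  refine (isCompact_closedBall (0 : ℤ × ℤ) (1 / ρ)).finite_of_discrete.subset ?_
  rintro q ⟨hq, hcq⟩
  rw [mem_closedBall_zero_iff]
  by_contra! hlarge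
  have hq_pos : 0 < ‖q‖ := (by positivity : 0 < 1 / ρ).trans hlarge
  obtain ⟨p', z, hz, hdist⟩ := exists_dist_le_height_eq_intCast (norm_pos_iff.1 hq_pos) p
  have hclose : dist p' p < ρ := by
    refine hdist.trans_lt ?_
    rw [div_lt_iff₀ hq_pos]
    linarith [(div_lt_iff₀' hρ).1 hlarge]
  refine (hcq.trans ?_).not_gt (hball hclose)
  rw [DVal_eq_infDist]
  exact Metric.infDist_le_dist_of_mem (planeMap_mem_lineTorus hq hz)

lemma DVal_lineTorus_mem_progSet [Nonempty (Fin n)] {H : ℕ} (hH : 1 ≤ H) (ha : ∀ i, |a i| ≤ H)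
    (hb : ∀ i, |b i| ≤ H) {x y : ℤ} (hxy : IsCoprime x y)
    (hlt : DVal (lineTorus a b x y)
      < (⌊(12 * H ^ 2).factorial * DVal (Set.range (planeMap a b))⌋ + 1)
        / (12 * H ^ 2).factorial) :
    DVal (lineTorus a b x y) ∈ {DVal (Set.range (planeMap a b))} ∪
      progSet (DVal (Set.range (planeMap a b)))
        (1 / (4 * H ^ 2 * (12 * H ^ 2).factorial).factorial)
        (1 / (4 * H ^ 2 * (12 * H ^ 2).factorial).factorial) := by
  obtain ⟨τ, hτ⟩ := exists_DVal_lineTorus_eq_dist a b x y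
  obtain ⟨m, hm⟩ := exists_forall_eval_liftForm_le a b (τ * x, τ * y)
  have hd (p : ℝ × ℝ) : ∃ k, DVal (Set.range (planeMap a b)) ≤ (liftForm a b m k).eval p := by
    obtain ⟨k, hk⟩ := exists_dist_le_eval_liftForm a b m p
    rw [DVal_eq_infDist]
    exact ⟨k, (Metric.infDist_le_dist_of_mem (Set.mem_range_self p)).trans hk⟩
  have hmin (p : ℝ × ℝ) (z : ℤ) (hz : (HalfIntForm.height x y).eval p = z) :
      ∃ k, DVal (lineTorus a b x y) ≤ (liftForm a b m k).eval p := by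
    obtain ⟨k, hk⟩ := exists_dist_le_eval_liftForm a b m p
    rw [DVal_eq_infDist]
    exact ⟨k, (Metric.infDist_le_dist_of_mem (planeMap_mem_lineTorus hxy hz)).trans hk⟩
  have hle : DVal (Set.range (planeMap a b)) ≤ DVal (lineTorus a b x y) := by
    obtain ⟨k, hk⟩ := hd (τ * x, τ * y)
    exact hτ ▸ hk.trans (hm k)
  rcases hle.eq_or_lt with heq | hgt
  · exact Or.inl heq.symm
  · obtain ⟨q, hqden, hq⟩ := HalfIntForm.exists_rat_inv_sub hH (boundedBy_liftForm ha hb m) hd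
      (fun k => hτ ▸ hm k) hmin hgt ((lt_div_iff₀' (mod_cast Nat.factorial_pos _)).1 hlt)
    exact Or.inr (mem_progSet_of_rat_inv_sub hgt hqden hq)

end Distance

section Subtori

variable {n : ℕ}

lemma spanTorus_fin_two (v : Fin 2 → Fin n → ℤ) :
    spanTorus v = Set.range (planeMap (v 0) (v 1)) := by
  ext p
  simp only [spanTorus, Set.mem_ofPred_eq, Fin.sum_univ_two, planeMap, Set.mem_range, eq_comm]
  exact ⟨fun ⟨t, h⟩ => ⟨(t 0, t 1), h⟩, fun ⟨q, h⟩ => ⟨![q.1, q.2], by simpa using h⟩⟩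

/-- Each real multiple of `w j` is a combination of the `v i` up to an integer vector. There are
uncountably many multiples but only countably many integer vectors, so two multiples share one,
and their difference is a combination of the `v i`. -/
lemma mem_span_of_spanTorus_subset {k l : ℕ} {w : Fin k → Fin n → ℤ} {v : Fin l → Fin n → ℤ}
    (h : spanTorus w ⊆ spanTorus v) (j : Fin k) :
    (fun i => (w j i : ℝ)) ∈ Submodule.span ℝ (Set.range fun j i => (v j i : ℝ)) := by
  have hmod (τ : ℝ) : ∃ m : Fin n → ℤ,
      (fun i => τ * w j i - m i) ∈ Submodule.span ℝ (Set.range fun j i => (v j i : ℝ)) := by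
    obtain ⟨t, ht⟩ : (torusProj fun i => τ * (w j i : ℝ)) ∈ spanTorus v :=
      h ⟨Pi.single j τ, by simp [Pi.single_apply]⟩
    have hint (i : Fin n) : ∃ m : ℤ, τ * w j i - m = ∑ j, t j * (v j i : ℝ) := by
      have hi : ((τ * w j i - ∑ j, t j * (v j i : ℝ) : ℝ) : AddCircle (1 : ℝ)) = 0 := by
        rw [AddCircle.coe_sub, sub_eq_zero]
        exact congrFun ht i
      obtain ⟨m, hm⟩ := (AddCircle.coe_eq_zero_iff 1).1 hi
      exact ⟨m, by rw [zsmul_one] at hm; linarith⟩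
    choose m hm using hint
    refine ⟨m, (Submodule.mem_span_range_iff_exists_fun ℝ).2 ⟨t, ?_⟩⟩
    funext i
    simp [hm]
  choose m hm using hmod
  obtain ⟨τ, τ', hmτ, hne⟩ := Function.not_injective_iff.1 (not_injective_uncountable_countable m)
  have hdiff := Submodule.smul_mem _ (τ - τ')⁻¹ (Submodule.sub_mem _ (hm τ) (hm τ'))
  convert hdiff using 1
  funext i
  have hτ : τ - τ' ≠ 0 := sub_ne_zero.2 hne
  simp only [hmτ, Pi.smul_apply, Pi.sub_apply, smul_eq_mul]
  field_simp
  ring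

lemma exists_minor_ne_zero {ι R : Type*} [CommRing R] [Nontrivial R] {v : Fin 2 → ι → R}
    (hv : LinearIndependent R v) : ∃ i j, v 0 i * v 1 j - v 0 j * v 1 i ≠ 0 := by
  by_contra! hminor
  refine hv.ne_zero 0 (funext fun j => ?_)
  have hrel : ∑ k, ![v 1 j, -v 0 j] k • v k = 0 := by
    funext i
    simp only [Fin.sum_univ_two, Matrix.cons_val_zero, Matrix.cons_val_one, Pi.add_apply,
      Pi.smul_apply, smul_eq_mul, Pi.zero_apply]
    linear_combination hminor i j
  simpa using Fintype.linearIndependent_iff.1 hv _ hrel 1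

lemma exists_isCoprime_of_intCast_eq {ι : Type*} {a b w : ι → ℤ} {α β : ℝ} (hw : w ≠ 0)
    (hab : ∃ i j, a i * b j - a j * b i ≠ 0)
    (h : ∀ i, (w i : ℝ) = α * a i + β * b i) :
    ∃ x y : ℤ, IsCoprime x y ∧ ∃ c : ℝ, c ≠ 0 ∧ α = c * x ∧ β = c * y := by
  obtain ⟨i, j, hδ⟩ := hab
  have hδ' : (a i * b j - a j * b i : ℝ) ≠ 0 := mod_cast hδ
  have hα : α * (a i * b j - a j * b i) = (w i * b j - w j * b i : ℤ) := by
    push_cast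
    rw [h i, h j]
    ring
  have hβ : β * (a i * b j - a j * b i) = (a i * w j - a j * w i : ℤ) := by
    push_cast
    rw [h i, h j]
    ring
  have hgcd : 0 < (w i * b j - w j * b i).gcd (a i * w j - a j * w i) := by
    rw [Int.gcd_pos_iff]
    by_contra! hXY
    rw [hXY.1, Int.cast_zero, mul_eq_zero_iff_right hδ'] at hα
    rw [hXY.2, Int.cast_zero, mul_eq_zero_iff_right hδ'] at hβ
    refine hw (funext fun l => ?_)
    simpa [hα, hβ] using h l
  obtain ⟨g, x, y, hg, hxy, hX, hY⟩ := Int.exists_gcd_one' hgcd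
  refine ⟨x, y, Int.isCoprime_iff_gcd_eq_one.2 hxy, g / (a i * b j - a j * b i),
    div_ne_zero (mod_cast hg.ne') hδ', ?_, ?_⟩
  · rw [hX] at hα
    rw [div_mul_eq_mul_div, eq_div_iff hδ', hα]
    push_cast
    ring
  · rw [hY] at hβ
    rw [div_mul_eq_mul_div, eq_div_iff hδ', hβ]
    push_cast
    ring

lemma exists_lineTorus_eq_of_subset {v : Fin 2 → Fin n → ℤ}
    (hv : LinearIndependent ℝ fun j i => (v j i : ℝ)) {T : Set (Torus n)} (hT : IsSubtorus 1 T)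
    (hTv : T ⊆ spanTorus v) :
    ∃ x y : ℤ, IsCoprime x y ∧ T = lineTorus (v 0) (v 1) x y := by
  obtain ⟨w, hw, rfl⟩ := hT
  have hw₀ : w 0 ≠ 0 := fun h => hw.ne_zero 0 (funext fun i => by simp [h])
  obtain ⟨c, hc⟩ := (Submodule.mem_span_range_iff_exists_fun ℝ).1
    (mem_span_of_spanTorus_subset hTv 0)
  have hcoord (i : Fin n) : (w 0 i : ℝ) = c 0 * v 0 i + c 1 * v 1 i := by
    simpa [Fin.sum_univ_two] using (congrFun hc i).symm
  have hminor : ∃ i j, v 0 i * v 1 j - v 0 j * v 1 i ≠ 0 := by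
    exact_mod_cast exists_minor_ne_zero hv
  obtain ⟨x, y, hxy, e, he, hx, hy⟩ := exists_isCoprime_of_intCast_eq hw₀ hminor hcoord
  have hpoint (t : ℝ) : (torusProj fun i => ∑ j, t * (w j i : ℝ))
      = planeMap (v 0) (v 1) (t * e * x, t * e * y) := by
    refine congrArg torusProj (funext fun i => ?_)
    rw [Fin.sum_univ_one, hcoord, hx, hy]
    ring
  refine ⟨x, y, hxy, Set.Subset.antisymm ?_ ?_⟩
  · rintro _ ⟨t, rfl⟩
    refine ⟨t 0 * e, (hpoint (t 0)).symm.trans ?_⟩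
    simp only [Fin.sum_univ_one]
  · rintro _ ⟨τ, rfl⟩
    refine ⟨fun _ => τ / e, ?_⟩
    rw [hpoint, div_mul_cancel₀ τ he]

lemma exists_nat_forall_abs_le {ι κ : Type*} [Finite ι] [Finite κ] (v : ι → κ → ℤ) :
    ∃ H : ℕ, 1 ≤ H ∧ ∀ j i, |v j i| ≤ H := by
  obtain ⟨H, hH⟩ := (Set.finite_range fun q : ι × κ => (v q.1 q.2).natAbs).bddAbove
  refine ⟨H + 1, Nat.le_add_left 1 H, fun j i => ?_⟩
  have hji : (v j i).natAbs ≤ H := hH ⟨(j, i), rfl⟩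
  rw [Int.abs_eq_natAbs]
  exact_mod_cast hji.trans H.le_succ

theorem stmt1_general {U : Set (Torus n)} (hU : IsSubtorus 2 U) :
    ∃ α : ℚ, 0 < α ∧ {T : Set (Torus n) | IsSubtorus 1 T ∧ T ⊆ U ∧
      DVal T ∉ ({DVal U} ∪ progSet (DVal U) α α)}.Finite := by
  obtain ⟨v, hv, rfl⟩ := hU
  obtain ⟨i, -, -⟩ := exists_minor_ne_zero hv
  have : Nonempty (Fin n) := ⟨i⟩
  obtain ⟨H, hH, hvH⟩ := exists_nat_forall_abs_le v
  have hlt : DVal (Set.range (planeMap (v 0) (v 1)))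
      < (⌊(12 * H ^ 2).factorial * DVal (Set.range (planeMap (v 0) (v 1)))⌋ + 1)
        / (12 * H ^ 2).factorial :=
    (lt_div_iff₀' (mod_cast Nat.factorial_pos _)).2 (Int.lt_floor_add_one _)
  refine ⟨1 / (4 * H ^ 2 * (12 * H ^ 2).factorial).factorial, by positivity, ?_⟩
  refine ((finite_setOf_le_DVal_lineTorus hlt).image
    fun q => lineTorus (v 0) (v 1) q.1 q.2).subset ?_
  rintro T ⟨hT, hTU, hval⟩
  obtain ⟨x, y, hxy, rfl⟩ := exists_lineTorus_eq_of_subset hv hT hTU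
  rw [spanTorus_fin_two] at hval
  refine ⟨(x, y), ⟨hxy, ?_⟩, rfl⟩
  by_contra! hsmall
  exact hval (DVal_lineTorus_mem_progSet hH (hvH 0) (hvH 1) hxy hsmall)

end Subtori

/-- Only finitely many 1-dimensional proper subtori `T ⊆ U` have `D(T)` outside
`{D(U)} ∪ ⋃ᵢ (D(U) + 1/Prog(αᵢ, βᵢ))`. -/
theorem stmt1 (n : ℕ) (hn : 2 ≤ n) (U : Set (Torus n))
    (hU : IsSubtorus 2 U) (hUproper : IsProperSub U) :
    ∃ (N : ℕ) (α β : Fin N → ℚ),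
      (∀ i, 0 < α i) ∧ (∀ i, 0 < β i) ∧
      {T : Set (Torus n) | IsSubtorus 1 T ∧ IsProperSub T ∧ T ⊆ U ∧
        DVal T ∉ ({DVal U} ∪ ⋃ i : Fin N, progSet (DVal U) (α i) (β i))}.Finite := by
  obtain ⟨α, hα, hfin⟩ := stmt1_general hU
  exact ⟨1, fun _ => α, fun _ => α, fun _ => hα, fun _ => hα, hfin.subset fun T hT =>
    ⟨hT.1, hT.2.2.1, by simpa only [Set.iUnion_const] using hT.2.2.2⟩⟩
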